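/- arXiv:1005.1902 — 2 statements merged into one kernel-verified Lean document; each statement's English description precedes it below -/
import Mathlib

section
/- Let λ ≥ 2 and θ ∈ ℝ² ∖ {0}. Then there is at most one element g ∈ {h, v, h⁻¹, v⁻¹} such that ‖ρ_λ(g)θ‖ < ‖θ‖. Moreover, if g₁ ∈ {h, v, h⁻¹, v⁻¹} satisfies ‖ρ_λ(g₁)θ‖ < ‖θ‖ (respectively ‖ρ_λ(g₁)θ‖ ≤ ‖θ‖), then every g₂ ∈ {h, v, h⁻¹, v⁻¹} with g₂ ≠ g₁ satisfies ‖ρ_λ(g₂)θ‖ > ‖θ‖ (respectively ‖ρ_λ(g₂)θ‖ ≥ ‖θ‖). -/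
noncomputable section

abbrev F2 := FreeGroup Bool

def gh : F2 := FreeGroup.of true
def gv : F2 := FreeGroup.of false

def hmat (l : ℝ) : Matrix.SpecialLinearGroup (Fin 2) ℝ :=
  ⟨!![1, l; 0, 1], by norm_num [Matrix.det_fin_two_of]⟩

def vmat (l : ℝ) : Matrix.SpecialLinearGroup (Fin 2) ℝ :=
  ⟨!![1, 0; l, 1], by norm_num [Matrix.det_fin_two_of]⟩

def rho (l : ℝ) : F2 →* Matrix.SpecialLinearGroup (Fin 2) ℝ :=
  FreeGroup.lift fun b => if b then hmat l else vmat l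

def act (l : ℝ) (g : F2) (x : Fin 2 → ℝ) : Fin 2 → ℝ :=
  (rho l g).val.mulVec x

def nrm (x : Fin 2 → ℝ) : ℝ := Real.sqrt (x 0 ^ 2 + x 1 ^ 2)

def Circ : Set (Fin 2 → ℝ) := {x | nrm x = 1}

def gens : Set F2 := {gh, gv, gh⁻¹, gv⁻¹}

def ShrinkSet (l : ℝ) (g : F2) : Set (Fin 2 → ℝ) :=
  {x | x ∈ Circ ∧ nrm (act l g x) < 1}

def ExpSet (l : ℝ) (g : F2) : Set (Fin 2 → ℝ) :=
  {x | x ∈ Circ ∧ 1 < nrm (act l g x)}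

def IsGeodesicRay (g : ℕ → F2) : Prop :=
  g 0 = 1 ∧ (∀ n, g (n + 1) * (g n)⁻¹ ∈ gens) ∧ ∀ n, g (n + 2) * (g n)⁻¹ ≠ 1

def IsGeodesicSegment (g : ℕ → F2) (N : ℕ) : Prop :=
  g 0 = 1 ∧ (∀ n, n + 1 ≤ N → g (n + 1) * (g n)⁻¹ ∈ gens) ∧
    ∀ n, n + 2 ≤ N → g (n + 2) * (g n)⁻¹ ≠ 1

def IsShrinkingSeq (l : ℝ) (g : ℕ → F2) (θ : Fin 2 → ℝ) : Prop :=
  ∀ ε : ℝ, 0 < ε → ∃ i : ℕ, nrm (act l (g i) θ) < ε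

def Shrinkable (l : ℝ) (θ : Fin 2 → ℝ) : Prop :=
  ∀ ε : ℝ, 0 < ε → ∃ g : F2, nrm (act l g θ) < ε

def Renormalizable (l : ℝ) (θ : Fin 2 → ℝ) : Prop :=
  Shrinkable l θ ∧ ∀ k : F2, ∀ c : ℝ, act l (k * (gh * gv⁻¹) * k⁻¹) θ ≠ c • θ

abbrev SP := Bool × Bool

def Quad (s : SP) : Set (Fin 2 → ℝ) :=
  {x | (if s.1 then 0 < x 0 else x 0 < 0) ∧ (if s.2 then 0 < x 1 else x 1 < 0)}

def letterSigma : Bool × Bool → SP → SP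
  | (true, true), s => (s.2, s.2)
  | (false, true), s => (s.1, s.1)
  | (true, false), s => (!s.2, s.2)
  | (false, false), s => (s.1, !s.1)

def SigmaAct (g : F2) : SP → SP :=
  (FreeGroup.toWord g).foldr (fun w acc => letterSigma w ∘ acc) id

def gammaAut : F2 →* F2 := FreeGroup.lift fun b => if b then gv⁻¹ else gh⁻¹

def rPerm (s : SP) : SP := (!s.2, s.1)

def rPermInv (s : SP) : SP := (s.2, !s.1)

def shiftRay (g : ℕ → F2) : ℕ → F2 := fun n => g (n + 1) * (g 1)⁻¹

def TailEquiv (g g' : ℕ → F2) : Prop :=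
  ∃ m n : ℕ, shiftRay^[m] g = shiftRay^[n] g'

def seqPow (a : F2) : ℕ → F2 := fun n => a ^ n

def seqPer (a b : F2) : ℕ → F2 := fun n =>
  if n % 2 = 0 then (b * a) ^ (n / 2) else a * (b * a) ^ (n / 2)

def Cond1 (g : ℕ → F2) : Prop :=
  ¬ TailEquiv g (seqPow gh) ∧ ¬ TailEquiv g (seqPow gh⁻¹) ∧
    ¬ TailEquiv g (seqPow gv) ∧ ¬ TailEquiv g (seqPow gv⁻¹)

def Cond2 (g : ℕ → F2) : Prop :=
  ¬ TailEquiv g (seqPer gh gv⁻¹) ∧ ¬ TailEquiv g (seqPer gh⁻¹ gv)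

def adjSum {V : Type} (G : SimpleGraph V) (f : V → ℝ) (v : V) : ℝ :=
  ∑ᶠ w ∈ G.neighborSet v, f w

def BoundedValance {V : Type} (G : SimpleGraph V) : Prop :=
  ∃ D : ℕ, ∀ v, (G.neighborSet v).Finite ∧ (G.neighborSet v).ncard ≤ D

def BipartWith {V : Type} (G : SimpleGraph V) (A : Set V) : Prop :=
  ∀ v w, G.Adj v w → (v ∈ A ↔ w ∉ A)

def Hop {V : Type} (G : SimpleGraph V) (A : Set V) (k : ℤ) (f : V → ℝ) : V → ℝ :=
  fun v => f v + (k : ℝ) * Set.indicator A (adjSum G f) v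

def Vop {V : Type} (G : SimpleGraph V) (A : Set V) (k : ℤ) (f : V → ℝ) : V → ℝ :=
  fun v => f v + (k : ℝ) * Set.indicator Aᶜ (adjSum G f) v

def QuadV {V : Type} (A : Set V) (s : SP) : Set (V → ℝ) :=
  {f | (∀ v ∈ A, f v = 0 ∨ (if s.1 then 0 < f v else f v < 0)) ∧
       ∀ v, v ∉ A → f v = 0 ∨ (if s.2 then 0 < f v else f v < 0)}

def valance {V : Type} (G : SimpleGraph V) (v : V) : ℕ := (G.neighborSet v).ncard

def evec {V : Type} (v : V) : V → ℝ := Set.indicator {v} 1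

def InSpoke {V : Type} (G : SimpleGraph V) (x : V) : Prop :=
  ∃ k : ℕ, 2 ≤ k ∧ ∃ c : ℕ → V,
    (∀ i j, 1 ≤ i → i ≤ k → 1 ≤ j → j ≤ k → c i = c j → i = j) ∧
    valance G (c 1) = 1 ∧
    (∀ i, 2 ≤ i → i ≤ k - 1 →
      valance G (c i) = 2 ∧ G.Adj (c i) (c (i - 1)) ∧ G.Adj (c i) (c (i + 1))) ∧
    ∃ i, 1 ≤ i ∧ i ≤ k ∧ x = c i

/-!
Write `a = x 0` and `b = x 1`. The shear with parameter `s` along the first axis changes the squared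
norm of `x` by `2sab + (sb)²`, and the one with parameter `t` along the second axis changes it by
`2tab + (ta)²`. The sum of these two changes is a quadratic form in `(a, b)` that is positive
semidefinite as soon as `|s + t| ≤ |st|`, which holds when `|s|, |t| ≥ 2`. For a shear and its
inverse the cross terms cancel. Hence the mean of `‖g₁x‖²` and `‖g₂x‖²` is at least `‖x‖²` for any
two distinct letters, so if one of them is below `‖x‖²` the other is above.
-/

section OrderedRing

variable {R : Type*} [CommRing R] [LinearOrder R] [IsStrictOrderedRing R] {a b c s t : R}

lemma lt_of_lt_of_two_mul_sq_le (ha : 0 ≤ a) (hb : 0 ≤ b) (h : 2 * c ^ 2 ≤ a ^ 2 + b ^ 2)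
    (hac : a < c) : c < b :=
  lt_of_pow_lt_pow_left₀ 2 hb (by linarith [pow_lt_pow_left₀ hac ha two_ne_zero])

lemma le_of_le_of_two_mul_sq_le (ha : 0 ≤ a) (hb : 0 ≤ b) (h : 2 * c ^ 2 ≤ a ^ 2 + b ^ 2)
    (hac : a ≤ c) : c ≤ b :=
  le_of_sq_le_sq (by linarith [pow_le_pow_left₀ ha hac 2]) hb

lemma abs_add_le_abs_mul_of_two_le_abs (hs : 2 ≤ |s|) (ht : 2 ≤ |t|) : |s + t| ≤ |s * t| :=
  calc |s + t| ≤ |s| + |t| := abs_add_le s t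
    _ ≤ |s| * |t| := by nlinarith
    _ = |s * t| := (abs_mul s t).symm

lemma sq_mul_add_two_mul_add_sq_mul_nonneg (h : |s + t| ≤ |s * t|) (a b : R) :
    0 ≤ (t * a) ^ 2 + 2 * ((s + t) * (a * b)) + (s * b) ^ 2 := by
  have cross_le : |(s + t) * (a * b)| ≤ |t * a| * |s * b| :=
    calc |(s + t) * (a * b)| = |s + t| * |a * b| := abs_mul _ _
      _ ≤ |s * t| * |a * b| := by gcongr
      _ = |t * a| * |s * b| := by simp only [abs_mul]; ring
  have am_gm : 2 * |t * a| * |s * b| ≤ (t * a) ^ 2 + (s * b) ^ 2 := by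
    simpa only [sq_abs] using two_mul_le_add_sq |t * a| |s * b|
  linarith [neg_abs_le ((s + t) * (a * b))]

end OrderedRing

lemma nrm_nonneg (x : Fin 2 → ℝ) : 0 ≤ nrm x := Real.sqrt_nonneg _

lemma nrm_sq (x : Fin 2 → ℝ) : nrm x ^ 2 = x 0 ^ 2 + x 1 ^ 2 := Real.sq_sqrt (by positivity)

lemma hmat_inv (l : ℝ) : (hmat l)⁻¹ = hmat (-l) := by
  apply Subtype.ext
  rw [Matrix.SpecialLinearGroup.coe_inv]
  simp [hmat, Matrix.adjugate_fin_two]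

lemma vmat_inv (l : ℝ) : (vmat l)⁻¹ = vmat (-l) := by
  apply Subtype.ext
  rw [Matrix.SpecialLinearGroup.coe_inv]
  simp [vmat, Matrix.adjugate_fin_two]

lemma rho_gh (l : ℝ) : rho l gh = hmat l := by simp [rho, gh]

lemma rho_gv (l : ℝ) : rho l gv = vmat l := by simp [rho, gv]

section Action

variable (l s t : ℝ) (x : Fin 2 → ℝ)

lemma act_gh_inv : act l gh⁻¹ x = act (-l) gh x := by
  simp only [act, map_inv, rho_gh, hmat_inv]

lemma act_gv_inv : act l gv⁻¹ x = act (-l) gv x := by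
  simp only [act, map_inv, rho_gv, vmat_inv]

lemma act_gh : act l gh x = ![x 0 + l * x 1, x 1] := by
  ext i
  fin_cases i <;> simp [act, rho_gh, hmat, Matrix.mulVec, dotProduct]

lemma act_gv : act l gv x = ![x 0, l * x 0 + x 1] := by
  ext i
  fin_cases i <;> simp [act, rho_gv, vmat, Matrix.mulVec, dotProduct]

lemma nrm_act_gh_sq : nrm (act l gh x) ^ 2 = nrm x ^ 2 + 2 * l * (x 0 * x 1) + (l * x 1) ^ 2 := by
  simp only [nrm_sq, act_gh, Matrix.cons_val_zero, Matrix.cons_val_one]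
  ring

lemma nrm_act_gv_sq : nrm (act l gv x) ^ 2 = nrm x ^ 2 + 2 * l * (x 0 * x 1) + (l * x 0) ^ 2 := by
  simp only [nrm_sq, act_gv, Matrix.cons_val_zero, Matrix.cons_val_one]
  ring

lemma two_mul_nrm_sq_le_act_gh_add_act_neg_gh :
    2 * nrm x ^ 2 ≤ nrm (act l gh x) ^ 2 + nrm (act (-l) gh x) ^ 2 := by
  rw [nrm_act_gh_sq, nrm_act_gh_sq]
  linarith [sq_nonneg (l * x 1)]

lemma two_mul_nrm_sq_le_act_gv_add_act_neg_gv :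
    2 * nrm x ^ 2 ≤ nrm (act l gv x) ^ 2 + nrm (act (-l) gv x) ^ 2 := by
  rw [nrm_act_gv_sq, nrm_act_gv_sq]
  linarith [sq_nonneg (l * x 0)]

variable {l s t}

lemma two_mul_nrm_sq_le_act_gh_add_act_gv (h : |s + t| ≤ |s * t|) :
    2 * nrm x ^ 2 ≤ nrm (act s gh x) ^ 2 + nrm (act t gv x) ^ 2 := by
  rw [nrm_act_gh_sq, nrm_act_gv_sq]
  linarith [sq_mul_add_two_mul_add_sq_mul_nonneg h (x 0) (x 1)]

lemma two_mul_nrm_sq_le_act_add_act (hl : 2 ≤ |l|) {g₁ g₂ : F2} (hg₁ : g₁ ∈ gens)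
    (hg₂ : g₂ ∈ gens) (hne : g₂ ≠ g₁) :
    2 * nrm x ^ 2 ≤ nrm (act l g₁ x) ^ 2 + nrm (act l g₂ x) ^ 2 := by
  have hl_neg : 2 ≤ |-l| := by rwa [abs_neg]
  have h_h_inv := two_mul_nrm_sq_le_act_gh_add_act_neg_gh l x
  have v_v_inv := two_mul_nrm_sq_le_act_gv_add_act_neg_gv l x
  have mixed {s t : ℝ} (hs : 2 ≤ |s|) (ht : 2 ≤ |t|) :=
    two_mul_nrm_sq_le_act_gh_add_act_gv x (abs_add_le_abs_mul_of_two_le_abs hs ht)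
  have h_v := mixed hl hl
  have h_v_inv := mixed hl hl_neg
  have h_inv_v := mixed hl_neg hl
  have h_inv_v_inv := mixed hl_neg hl_neg
  simp only [← act_gh_inv, ← act_gv_inv] at h_h_inv v_v_inv h_v_inv h_inv_v h_inv_v_inv
  simp only [gens, Set.mem_insert_iff, Set.mem_singleton_iff] at hg₁ hg₂
  rcases hg₁ with rfl | rfl | rfl | rfl <;> rcases hg₂ with rfl | rfl | rfl | rfl <;>
    first
    | exact absurd rfl hne
    | linarith

end Action

theorem stmt2_general (l : ℝ) (hl : 2 ≤ |l|) (x : Fin 2 → ℝ) :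
    (∀ g₁ ∈ gens, ∀ g₂ ∈ gens,
      nrm (act l g₁ x) < nrm x → nrm (act l g₂ x) < nrm x → g₁ = g₂) ∧
    (∀ g₁ ∈ gens, nrm (act l g₁ x) < nrm x →
      ∀ g₂ ∈ gens, g₂ ≠ g₁ → nrm x < nrm (act l g₂ x)) ∧
    (∀ g₁ ∈ gens, nrm (act l g₁ x) ≤ nrm x →
      ∀ g₂ ∈ gens, g₂ ≠ g₁ → nrm x ≤ nrm (act l g₂ x)) := by
  have expands_of_shrinks : ∀ g₁ ∈ gens, nrm (act l g₁ x) < nrm x →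
      ∀ g₂ ∈ gens, g₂ ≠ g₁ → nrm x < nrm (act l g₂ x) := fun g₁ hg₁ hlt g₂ hg₂ hne =>
    lt_of_lt_of_two_mul_sq_le (nrm_nonneg _) (nrm_nonneg _)
      (two_mul_nrm_sq_le_act_add_act x hl hg₁ hg₂ hne) hlt
  refine ⟨fun g₁ hg₁ g₂ hg₂ hlt₁ hlt₂ => ?_, expands_of_shrinks, fun g₁ hg₁ hle g₂ hg₂ hne => ?_⟩
  · by_contra hne
    exact hlt₂.not_gt (expands_of_shrinks g₁ hg₁ hlt₁ g₂ hg₂ (Ne.symm hne))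
  · exact le_of_le_of_two_mul_sq_le (nrm_nonneg _) (nrm_nonneg _)
      (two_mul_nrm_sq_le_act_add_act x hl hg₁ hg₂ hne) hle

theorem stmt2 (l : ℝ) (hl : 2 ≤ l) (x : Fin 2 → ℝ) (hx : x ≠ 0) :
    (∀ g₁ ∈ gens, ∀ g₂ ∈ gens,
      nrm (act l g₁ x) < nrm x → nrm (act l g₂ x) < nrm x → g₁ = g₂) ∧
    (∀ g₁ ∈ gens, nrm (act l g₁ x) < nrm x →
      ∀ g₂ ∈ gens, g₂ ≠ g₁ → nrm x < nrm (act l g₂ x)) ∧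
    (∀ g₁ ∈ gens, nrm (act l g₁ x) ≤ nrm x →
      ∀ g₂ ∈ gens, g₂ ≠ g₁ → nrm x ≤ nrm (act l g₂ x)) :=
  stmt2_general l (hl.trans (le_abs_self l)) x
end
end

section
/- Let λ ≥ 2, let ⟨g_i⟩ be a geodesic ray or geodesic segment in F₂, let s ∈ SP, and suppose θ ∈ cl(Exp_λ(g₁) ∩ Q_s) (closure taken in ℝ², with θ ∈ S¹). Define s_i = Σ^{g_i}(s). Then ρ_λ(g_i)θ ∈ cl(Q_{s_i}) for all i. -/
noncomputable section

/-!
A letter of `F₂` moves one coordinate `u` of the plane, `u ↦ u + ε λ t`, and fixes the other one,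
`t`. On the quadrant with sign `τ` of `t` it increases the norm exactly when
`0 < τ (2 ε u + λ t)`, and then the new sign of `u` is `ε τ`, as the expanding sign action says.
When `λ ≥ 2`, the image of a vector satisfying `0 ≤ τ (2 ε u + λ t)` satisfies the same condition
for every letter except the inverse of the one just applied. So along a geodesic the condition,
once it holds for the first letter, holds at every step.
-/

section FreeGroupWords

variable {α : Type*}

lemma mk_singleton_mul_mk_singleton_eq_one {w w' : α × Bool} (h₁ : w'.1 = w.1)
    (h₂ : w'.2 ≠ w.2) : FreeGroup.mk [w'] * FreeGroup.mk [w] = 1 := by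
  obtain ⟨a, e⟩ := w
  obtain ⟨a', e'⟩ := w'
  obtain rfl : a' = a := h₁
  obtain rfl : e' = !e := Bool.eq_not.mpr h₂
  rw [mul_eq_one_iff_eq_inv]
  rfl

variable [DecidableEq α] {g g' : FreeGroup α} {w : α × Bool}

lemma toWord_mk_singleton_mul (h : FreeGroup.IsReduced (w :: g.toWord)) :
    (FreeGroup.mk [w] * g).toWord = w :: g.toWord := by
  rw [FreeGroup.toWord_mul, FreeGroup.toWord_mk, FreeGroup.reduce_singleton,
    List.singleton_append, h.reduce_eq]

lemma eq_mk_singleton_mul_of_toWord_eq_cons (h : g'.toWord = w :: g.toWord) :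
    g' = FreeGroup.mk [w] * g := by
  rw [← FreeGroup.mk_toWord (x := g'), h, ← List.singleton_append, ← FreeGroup.mul_mk,
    FreeGroup.mk_toWord]

end FreeGroupWords

section Geodesics

variable {g : ℕ → F2} {N : ℕ}

lemma exists_eq_mk_singleton_of_mem_gens {a : F2} (ha : a ∈ gens) :
    ∃ w : Bool × Bool, a = FreeGroup.mk [w] := by
  rcases ha with h | h | h | h
  · exact ⟨(true, true), h⟩
  · exact ⟨(false, true), h⟩
  · exact ⟨(true, false), h⟩
  · exact ⟨(false, false), h⟩

lemma IsGeodesicRay.isGeodesicSegment (hg : IsGeodesicRay g) (N : ℕ) : IsGeodesicSegment g N :=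
  ⟨hg.1, fun n _ => hg.2.1 n, fun n _ => hg.2.2 n⟩

namespace IsGeodesicSegment

lemma exists_succ_eq_mk_singleton_mul (hg : IsGeodesicSegment g N) {n : ℕ} (hn : n + 1 ≤ N) :
    ∃ w : Bool × Bool, g (n + 1) = FreeGroup.mk [w] * g n := by
  obtain ⟨w, hw⟩ := exists_eq_mk_singleton_of_mem_gens (hg.2.1 n hn)
  exact ⟨w, mul_inv_eq_iff_eq_mul.mp hw⟩

lemma exists_toWord_succ_eq_cons (hg : IsGeodesicSegment g N) {n : ℕ} (hn : n + 1 ≤ N) :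
    ∃ w : Bool × Bool, (g (n + 1)).toWord = w :: (g n).toWord := by
  induction n with
  | zero =>
    obtain ⟨w, hw⟩ := hg.exists_succ_eq_mk_singleton_mul hn
    refine ⟨w, hw ▸ toWord_mk_singleton_mul ?_⟩
    rw [hg.1, FreeGroup.toWord_one]
    exact FreeGroup.IsReduced.singleton
  | succ n ih =>
    obtain ⟨w, hw⟩ := ih (by omega)
    obtain ⟨w', hw'⟩ := hg.exists_succ_eq_mk_singleton_mul hn
    have not_inverse : w'.1 = w.1 → w'.2 = w.2 := by
      intro same_generator
      by_contra opposite_sign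
      apply hg.2.2 n hn
      rw [hw', eq_mk_singleton_mul_of_toWord_eq_cons hw, ← mul_assoc,
        mk_singleton_mul_mk_singleton_eq_one same_generator opposite_sign, one_mul,
        mul_inv_cancel]
    refine ⟨w', hw' ▸ toWord_mk_singleton_mul ?_⟩
    rw [hw, FreeGroup.isReduced_cons_cons, ← hw]
    exact ⟨not_inverse, FreeGroup.isReduced_toWord⟩

end IsGeodesicSegment

end Geodesics

section Coordinates

/-- The real sign `±1` encoded by a Boolean, with `true` standing for `+`. It serves both for the
components of a sign pair and for the exponent of a letter of the free group. -/
def sgn (b : Bool) : ℝ := if b then 1 else -1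

lemma sgn_mul_self (b : Bool) : sgn b * sgn b = 1 := by
  cases b <;> norm_num [sgn]

lemma sgn_ne_zero (b : Bool) : sgn b ≠ 0 :=
  left_ne_zero_of_mul_eq_one (sgn_mul_self b)

/-- The sign pair `s` as a vector with entries `±1`. -/
def signVec (s : SP) (i : Fin 2) : ℝ := sgn (![s.1, s.2] i)

/-- The index of the coordinate that the generator `a` moves: `h` (encoded by `true`) moves the
first one, `v` the second one. Accordingly `a` fixes the coordinate `axis !a`. -/
def axis (a : Bool) : Fin 2 := if a then 0 else 1

lemma forall_fin_two_iff_axis {p : Fin 2 → Prop} (a : Bool) :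
    (∀ i, p i) ↔ p (axis a) ∧ p (axis !a) := by
  cases a <;> simp [axis, Fin.forall_fin_two, and_comm]

lemma nrm_eq_sqrt_axis (a : Bool) (x : Fin 2 → ℝ) :
    nrm x = √(x (axis a) ^ 2 + x (axis !a) ^ 2) := by
  cases a <;> simp [nrm, axis, add_comm]

end Coordinates

section Quadrants

variable {s : SP} {x : Fin 2 → ℝ}

lemma Quad_eq_pi (s : SP) : Quad s = Set.univ.pi fun i => {t | 0 < signVec s i * t} := by
  obtain ⟨p, q⟩ := s
  ext x
  cases p <;> cases q <;> simp [Quad, signVec, sgn, Fin.forall_fin_two]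

lemma closure_setOf_mul_pos {c : ℝ} (hc : c ≠ 0) :
    closure {t : ℝ | 0 < c * t} = {t | 0 ≤ c * t} := by
  have h := (Homeomorph.mulLeft₀ c hc).preimage_closure (Set.Ioi 0)
  rw [closure_Ioi] at h
  exact h.symm

lemma closure_Quad (s : SP) : closure (Quad s) = {x | ∀ i, 0 ≤ signVec s i * x i} := by
  rw [Quad_eq_pi, closure_pi_set]
  ext x
  simp [closure_setOf_mul_pos (c := signVec s _) (sgn_ne_zero _)]

lemma mem_closure_Quad_iff_axis (a : Bool) :
    x ∈ closure (Quad s) ↔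
      0 ≤ signVec s (axis a) * x (axis a) ∧ 0 ≤ signVec s (axis !a) * x (axis !a) := by
  rw [closure_Quad]
  exact forall_fin_two_iff_axis a

end Quadrants

section Action

variable (l : ℝ) (a e : Bool) (s : SP) (x : Fin 2 → ℝ)

lemma act_one : act l 1 x = x := by
  simp [act]

lemma act_mul (g g' : F2) : act l (g * g') x = act l g (act l g' x) := by
  simp only [act, map_mul, Matrix.SpecialLinearGroup.coe_mul, Matrix.mulVec_mulVec]

lemma rho_mk_singleton :
    (rho l (FreeGroup.mk [(a, e)])).val =
      if a then !![1, sgn e * l; 0, 1] else !![1, 0; sgn e * l, 1] := by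
  rw [rho, FreeGroup.lift_mk, List.map_singleton, List.prod_singleton]
  cases a <;> cases e <;>
    simp only [cond_true, cond_false, if_true, if_false, Bool.false_eq_true,
      Matrix.SpecialLinearGroup.coe_inv] <;>
    simp [hmat, vmat, sgn, Matrix.adjugate_fin_two]

lemma act_mk_singleton_axis :
    act l (FreeGroup.mk [(a, e)]) x (axis a) = x (axis a) + sgn e * l * x (axis !a) := by
  rw [act, rho_mk_singleton]
  cases a <;> simp [axis, Matrix.mulVec, dotProduct, Fin.sum_univ_two, add_comm]

lemma act_mk_singleton_axis_not :
    act l (FreeGroup.mk [(a, e)]) x (axis !a) = x (axis !a) := by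
  rw [act, rho_mk_singleton]
  cases a <;> simp [axis, Matrix.mulVec, dotProduct, Fin.sum_univ_two]

lemma signVec_letterSigma_axis :
    signVec (letterSigma (a, e) s) (axis a) = sgn e * signVec s (axis !a) := by
  obtain ⟨p, q⟩ := s
  cases a <;> cases e <;> cases p <;> cases q <;> simp [letterSigma, signVec, sgn, axis]

lemma signVec_letterSigma_axis_not :
    signVec (letterSigma (a, e) s) (axis !a) = signVec s (axis !a) := by
  cases a <;> cases e <;> simp [letterSigma, signVec, axis]

lemma SigmaAct_one : SigmaAct 1 s = s := by
  simp [SigmaAct]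

variable {s} in
lemma SigmaAct_of_toWord_eq_cons {g g' : F2} {w : Bool × Bool}
    (h : g'.toWord = w :: g.toWord) : SigmaAct g' s = letterSigma w (SigmaAct g s) := by
  simp [SigmaAct, h]

variable {l x} in
lemma act_of_toWord_eq_cons {g g' : F2} {w : Bool × Bool} (h : g'.toWord = w :: g.toWord) :
    act l g' x = act l (FreeGroup.mk [w]) (act l g x) := by
  rw [eq_mk_singleton_mul_of_toWord_eq_cons h, act_mul]

end Action

section ExpandingCone

variable {l : ℝ} {w w' : Bool × Bool} {s : SP} {x : Fin 2 → ℝ}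

/-- For `0 < l`, the closure of the set of vectors in the quadrant `Q_s` whose norm the letter `w`
increases. The norm condition is divided by `l` and by the absolute value of the fixed coordinate,
which makes it linear. -/
def expandingCone (l : ℝ) (w : Bool × Bool) (s : SP) : Set (Fin 2 → ℝ) :=
  closure (Quad s) ∩
    {x | 0 ≤ signVec s (axis !w.1) * (2 * sgn w.2 * x (axis w.1) + l * x (axis !w.1))}

lemma isClosed_expandingCone (l : ℝ) (w : Bool × Bool) (s : SP) :
    IsClosed (expandingCone l w s) :=
  isClosed_closure.inter (isClosed_le continuous_const (by fun_prop))

lemma mul_pos_of_mem_ExpSet (hl : 0 < l) (hx : x ∈ ExpSet l (FreeGroup.mk [w])) :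
    0 < x (axis !w.1) * (2 * sgn w.2 * x (axis w.1) + l * x (axis !w.1)) := by
  obtain ⟨a, e⟩ := w
  obtain ⟨on_circle, expanded⟩ := hx
  rw [Circ, Set.mem_ofPred_eq, nrm_eq_sqrt_axis a, Real.sqrt_eq_one] at on_circle
  rw [nrm_eq_sqrt_axis a, act_mk_singleton_axis, act_mk_singleton_axis_not,
    Real.lt_sqrt zero_le_one, one_pow, ← on_circle] at expanded
  refine pos_of_mul_pos_right (a := l) ?_ hl.le
  calc
    0 < (x (axis a) + sgn e * l * x (axis !a)) ^ 2 + x (axis !a) ^ 2 -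
          (x (axis a) ^ 2 + x (axis !a) ^ 2) := sub_pos.mpr expanded
    _ = l * (x (axis !a) * (2 * sgn e * x (axis a) + l * x (axis !a))) := by
      linear_combination l ^ 2 * x (axis !a) ^ 2 * sgn_mul_self e

lemma ExpSet_inter_Quad_subset_expandingCone (hl : 0 < l) :
    ExpSet l (FreeGroup.mk [w]) ∩ Quad s ⊆ expandingCone l w s := by
  rintro x ⟨hexp, hquad⟩
  refine ⟨subset_closure hquad, ?_⟩
  have fixed_pos : 0 < signVec s (axis !w.1) * x (axis !w.1) := by
    rw [Quad_eq_pi] at hquad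
    exact hquad _ trivial
  refine (pos_of_mul_pos_right (a := signVec s (axis !w.1) * x (axis !w.1)) ?_ fixed_pos.le).le
  rw [mul_mul_mul_comm, signVec, sgn_mul_self, one_mul]
  exact mul_pos_of_mem_ExpSet hl hexp

lemma act_mem_closure_Quad_of_mem_expandingCone (hl : 0 ≤ l) (hx : x ∈ expandingCone l w s) :
    act l (FreeGroup.mk [w]) x ∈ closure (Quad (letterSigma w s)) := by
  obtain ⟨a, e⟩ := w
  obtain ⟨hquad, hexp⟩ := hx
  obtain ⟨-, fixed_nonneg⟩ := (mem_closure_Quad_iff_axis a).mp hquad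
  rw [mem_closure_Quad_iff_axis a, act_mk_singleton_axis, act_mk_singleton_axis_not,
    signVec_letterSigma_axis, signVec_letterSigma_axis_not]
  refine ⟨?_, fixed_nonneg⟩
  set t := x (axis !a)
  set u := x (axis a)
  set τ := signVec s (axis !a)
  calc
    0 ≤ (τ * (2 * sgn e * u + l * t) + l * (τ * t)) / 2 :=
      div_nonneg (add_nonneg hexp (mul_nonneg hl fixed_nonneg)) zero_le_two
    _ = sgn e * τ * (u + sgn e * l * t) := by
      linear_combination -τ * l * t * sgn_mul_self e

lemma act_mem_expandingCone_self (hl : 0 ≤ l) (hx : x ∈ expandingCone l w s) :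
    act l (FreeGroup.mk [w]) x ∈ expandingCone l w (letterSigma w s) := by
  refine ⟨act_mem_closure_Quad_of_mem_expandingCone hl hx, ?_⟩
  obtain ⟨a, e⟩ := w
  obtain ⟨hquad, hexp⟩ := hx
  obtain ⟨-, fixed_nonneg⟩ := (mem_closure_Quad_iff_axis a).mp hquad
  rw [Set.mem_ofPred_eq, act_mk_singleton_axis, act_mk_singleton_axis_not,
    signVec_letterSigma_axis_not]
  set t := x (axis !a)
  set u := x (axis a)
  set τ := signVec s (axis !a)
  calc
    0 ≤ τ * (2 * sgn e * u + l * t) + 2 * l * (τ * t) :=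
      add_nonneg hexp (mul_nonneg (by positivity) fixed_nonneg)
    _ = τ * (2 * sgn e * (u + sgn e * l * t) + l * t) := by
      linear_combination -2 * l * τ * t * sgn_mul_self e

lemma half_sq_add_two_mul_sgn_mul_sgn_nonneg (hl : 2 ≤ l) (b c : Bool) :
    0 ≤ l ^ 2 / 2 + 2 * (sgn b * sgn c) := by
  cases b <;> cases c <;> simp only [sgn, if_true, if_false, Bool.false_eq_true] <;> nlinarith

lemma act_mem_expandingCone_not (hl : 2 ≤ l) (hx : x ∈ expandingCone l w s) (e' : Bool) :
    act l (FreeGroup.mk [w]) x ∈ expandingCone l (!w.1, e') (letterSigma w s) := by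
  have hl₀ : 0 ≤ l := zero_le_two.trans hl
  refine ⟨act_mem_closure_Quad_of_mem_expandingCone hl₀ hx, ?_⟩
  obtain ⟨a, e⟩ := w
  obtain ⟨hquad, hexp⟩ := hx
  obtain ⟨-, fixed_nonneg⟩ := (mem_closure_Quad_iff_axis a).mp hquad
  rw [Set.mem_ofPred_eq, Bool.not_not, act_mk_singleton_axis, act_mk_singleton_axis_not,
    signVec_letterSigma_axis]
  set t := x (axis !a)
  set u := x (axis a)
  set τ := signVec s (axis !a)
  calc
    0 ≤ l / 2 * (τ * (2 * sgn e * u + l * t)) +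
          (l ^ 2 / 2 + 2 * (sgn e * sgn e')) * (τ * t) :=
      add_nonneg (mul_nonneg (by positivity) hexp)
        (mul_nonneg (half_sq_add_two_mul_sgn_mul_sgn_nonneg hl e e') fixed_nonneg)
    _ = sgn e * τ * (2 * sgn e' * t + l * (u + sgn e * l * t)) := by
      linear_combination -l ^ 2 * τ * t * sgn_mul_self e

lemma act_mem_expandingCone (hl : 2 ≤ l) (hw : w'.1 = w.1 → w'.2 = w.2)
    (hx : x ∈ expandingCone l w s) :
    act l (FreeGroup.mk [w]) x ∈ expandingCone l w' (letterSigma w s) := by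
  by_cases same_generator : w'.1 = w.1
  · obtain rfl : w' = w := Prod.ext same_generator (hw same_generator)
    exact act_mem_expandingCone_self (zero_le_two.trans hl) hx
  · have other_generator : w' = (!w.1, w'.2) := Prod.ext (Bool.eq_not.mpr same_generator) rfl
    rw [other_generator]
    exact act_mem_expandingCone_not hl hx w'.2

end ExpandingCone

namespace IsGeodesicSegment

variable {l : ℝ} {s : SP} {x : Fin 2 → ℝ} {g : ℕ → F2} {N : ℕ}

lemma act_mem_expandingCone_of_toWord_eq_cons (hg : IsGeodesicSegment g N) (hl : 2 ≤ l)
    (hx : x ∈ closure (ExpSet l (g 1) ∩ Quad s)) {n : ℕ} (hn : n + 1 ≤ N) {w : Bool × Bool}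
    (hw : (g (n + 1)).toWord = w :: (g n).toWord) :
    act l (g n) x ∈ expandingCone l w (SigmaAct (g n) s) := by
  induction n generalizing w with
  | zero =>
    have first_letter : g 1 = FreeGroup.mk [w] := by
      rw [eq_mk_singleton_mul_of_toWord_eq_cons hw, hg.1, mul_one]
    rw [first_letter] at hx
    rw [hg.1, act_one, SigmaAct_one]
    exact closure_minimal (ExpSet_inter_Quad_subset_expandingCone (zero_lt_two.trans_le hl))
      (isClosed_expandingCone l w s) hx
  | succ n ih =>
    obtain ⟨v, hv⟩ := hg.exists_toWord_succ_eq_cons (n := n) (by omega)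
    have reduced : FreeGroup.IsReduced (w :: v :: (g n).toWord) :=
      hv ▸ hw ▸ FreeGroup.isReduced_toWord
    rw [act_of_toWord_eq_cons hv, SigmaAct_of_toWord_eq_cons hv]
    exact act_mem_expandingCone hl (FreeGroup.isReduced_cons_cons.mp reduced).1
      (ih (by omega) hv)

lemma act_mem_closure_Quad (hg : IsGeodesicSegment g N) (hl : 2 ≤ l)
    (hx : x ∈ closure (ExpSet l (g 1) ∩ Quad s)) {i : ℕ} (hi : i ≤ N) :
    act l (g i) x ∈ closure (Quad (SigmaAct (g i) s)) := by
  cases i with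
  | zero =>
    rw [hg.1, act_one, SigmaAct_one]
    exact closure_mono Set.inter_subset_right hx
  | succ n =>
    obtain ⟨w, hw⟩ := hg.exists_toWord_succ_eq_cons hi
    rw [act_of_toWord_eq_cons hw, SigmaAct_of_toWord_eq_cons hw]
    exact act_mem_closure_Quad_of_mem_expandingCone (zero_le_two.trans hl)
      (hg.act_mem_expandingCone_of_toWord_eq_cons hl hx hi hw)

end IsGeodesicSegment

theorem stmt9 (l : ℝ) (hl : 2 ≤ l) (s : SP) (x : Fin 2 → ℝ) (hx : x ∈ Circ) :
    (∀ g : ℕ → F2, IsGeodesicRay g → x ∈ closure (ExpSet l (g 1) ∩ Quad s) →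
      ∀ i : ℕ, act l (g i) x ∈ closure (Quad (SigmaAct (g i) s))) ∧
    (∀ g : ℕ → F2, ∀ N : ℕ, 1 ≤ N → IsGeodesicSegment g N →
      x ∈ closure (ExpSet l (g 1) ∩ Quad s) →
      ∀ i : ℕ, i ≤ N → act l (g i) x ∈ closure (Quad (SigmaAct (g i) s))) :=
  ⟨fun _ hg h i => (hg.isGeodesicSegment i).act_mem_closure_Quad hl h le_rfl,
    fun _ _ _ hg h _ hi => hg.act_mem_closure_Quad hl h hi⟩
end
end
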